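/- arXiv:2301.11684 — 5 statements merged into one kernel-verified Lean document; each statement's English description precedes it below -/
import Mathlib

section
/- Let U ⊆ ℂ be open, let h be holomorphic on U, and let f = σ ∘ h be the corresponding antiholomorphic map. Let S ⊆ U be a finite set such that f maps S into S, and such that every z ∈ S satisfies f(f(z)) = z (so S consists of fixed points and period-2 orbits of f, all of which are fixed points of g = f ∘ f). For z ∈ S let μ(z) = conj(h'(f(z)))·h'(z) (which equals the derivative of g = f ∘ f at z). Assume that for every z ∈ S, μ(z) is not a nonpositive real number and μ(z) ≠ 1. Then the sum Σ_{z ∈ S} 1/log(μ(z)) is a real number, where log denotes the principal branch of the complex logarithm. -/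
open Complex

/-!
The map `f = σ ∘ h` restricts to an involution of `S`, and exchanging `z` and `f z` swaps the
two factors of the multiplier up to conjugation, so `μ (f z) = conj (μ z)`. Since no `μ z` lies
on the branch cut, the principal logarithm commutes with conjugation at `μ z`. Reindexing the sum
along `f` therefore shows that it equals its own conjugate.
-/

/-- Let `U ⊆ ℂ` be open, `h` holomorphic on `U`, `f = σ ∘ h`
antiholomorphic.  Let `S ⊆ U` be a finite set with `f(S) ⊆ S` and `f (f z) = z`
for all `z ∈ S` (fixed points and period-2 orbits of `f`, i.e. fixed points of
`g = f ∘ f`).  For `z ∈ S` let `μ z = conj (h' (f z)) * h' z` (the multiplier of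
`g` at `z`).  If no `μ z` is a nonpositive real number and no `μ z` equals `1`,
then `Σ_{z ∈ S} 1 / log (μ z)` is real (principal branch of the logarithm). -/
theorem sum_inv_log_multipliers_real
    (U : Set ℂ) (hU : IsOpen U) (h : ℂ → ℂ) (hh : DifferentiableOn ℂ h U)
    (S : Finset ℂ) (hSU : ↑S ⊆ U)
    (hmaps : ∀ z ∈ S, (starRingEnd ℂ) (h z) ∈ S)
    (hper : ∀ z ∈ S, (starRingEnd ℂ) (h ((starRingEnd ℂ) (h z))) = z)
    (μ : ℂ → ℂ)
    (hμ : ∀ z, μ z = (starRingEnd ℂ) (deriv h ((starRingEnd ℂ) (h z))) * deriv h z)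
    (hreg : ∀ z ∈ S, ¬((μ z).im = 0 ∧ (μ z).re ≤ 0) ∧ μ z ≠ 1) :
    (∑ z ∈ S, 1 / Complex.log (μ z)).im = 0 := by
  have hconj : ∀ z ∈ S, μ ((starRingEnd ℂ) (h z)) = (starRingEnd ℂ) (μ z) := by
    intro z hz
    rw [hμ, hμ, hper z hz, map_mul, Complex.conj_conj, mul_comm]
  -- Off the slit `(-∞, 0]` the argument is not `π`, so the principal branch commutes with `σ`.
  have hlog : ∀ z ∈ S, Complex.log ((starRingEnd ℂ) (μ z)) =
      (starRingEnd ℂ) (Complex.log (μ z)) := by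
    intro z hz
    refine Complex.log_conj _ fun harg => (hreg z hz).1 ?_
    obtain ⟨hre, him⟩ := Complex.arg_eq_pi_iff.1 harg
    exact ⟨him, hre.le⟩
  rw [← Complex.conj_eq_iff_im, map_sum]
  refine Finset.sum_bij' (fun z _ => (starRingEnd ℂ) (h z)) (fun z _ => (starRingEnd ℂ) (h z))
    hmaps hmaps hper hper ?_
  intro z hz
  rw [hconj z hz, hlog z hz, map_div₀, map_one]
end

section
/- Let d ≥ 2 be an integer. The set of pairs (c, z) ∈ ℂ × ℂ with z ≠ 0 such that conj(z)^d = −z/d and c = z − conj(z)^d (so that z is a fixed point of f_c(z) = conj(z)^d + c satisfying the codimension-2 parabolicity condition) is exactly the set of d + 1 pairs {(c_τ, z_τ) : τ ∈ ℂ, τ^{d+1} = 1}, where z_τ = d^{-1/(d-1)}·e^{iπ/(d+1)}·τ and c_τ = (d+1)·d^{-d/(d-1)}·e^{iπ/(d+1)}·τ. In particular there are exactly d + 1 parameter values c for which this occurs. -/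
open Complex

/-!
Taking absolute values in `conj(z)^d = -z/d` with `z ≠ 0` gives `|z|^(d-1) = 1/d`, so
`|z| = r := d^(-1/(d-1))`, the unique positive solution of `r^d = r/d`. Dividing by `r`, the unit
vector `u = z/r` satisfies `conj(u)^d = -u`, which is equivalent to `u^(d+1) = -1` because
`conj(u) = u⁻¹` (`conj_pow_eq_neg_iff`). As `ω = exp(iπ/(d+1))` is one solution of
`ω^(d+1) = -1`, all solutions are `u = ωτ` with `τ^(d+1) = 1`. Finally
`c = z + z/d = (d+1)/d · z`, and `r/d = r^d = d^(-d/(d-1))`. The pairs are counted through the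
`d + 1` roots of unity `τ`, since `τ ↦ rωτ` is injective.
-/

/-- On the unit circle, `conj u = u⁻¹` turns the codimension-two equation into a root equation. -/
lemma conj_pow_eq_neg_iff (d : ℕ) {u : ℂ} (hu : ‖u‖ = 1) :
    (starRingEnd ℂ) u ^ d = -u ↔ u ^ (d + 1) = -1 := by
  have hu0 : u ≠ 0 := by
    rintro rfl
    simp at hu
  have hinv : (starRingEnd ℂ) u = u⁻¹ := (Complex.inv_eq_conj hu).symm
  rw [hinv, inv_pow, inv_eq_iff_eq_inv, pow_succ, inv_neg]
  constructor
  · intro h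
    rw [h]
    field_simp
  · intro h
    field_simp
    linear_combination h

lemma multicorn_radius_pow (d : ℕ) (hd : 2 ≤ d) :
    ((d : ℝ) ^ (-(1 : ℝ) / ((d : ℝ) - 1))) ^ (d - 1) = 1 / d := by
  have hd' : (2 : ℝ) ≤ d := by exact_mod_cast hd
  rw [← Real.rpow_natCast, ← Real.rpow_mul (by positivity), Nat.cast_sub (by omega), Nat.cast_one,
    div_mul_cancel₀ _ (by linarith), Real.rpow_neg_one, one_div]

lemma multicorn_rpow_eq_radius_div (d : ℕ) (hd : 2 ≤ d) :
    (d : ℝ) ^ (-(d : ℝ) / ((d : ℝ) - 1)) = (d : ℝ) ^ (-(1 : ℝ) / ((d : ℝ) - 1)) / d := by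
  have hd' : (2 : ℝ) ≤ d := by exact_mod_cast hd
  have h1 : (d : ℝ) - 1 ≠ 0 := by linarith
  rw [← Real.rpow_sub_one (by linarith)]
  congr 1
  field_simp
  ring

/-- Solutions of the codimension-two equation, for any radius `r` with `r^(d-1) = 1/d` and any
choice `ω` of a `(d+1)`-st root of `-1`. -/
lemma codimension_two_iff (d : ℕ) (hd : 2 ≤ d) {r : ℝ} (hr : 0 < r) (hrd : r ^ (d - 1) = 1 / d)
    {ω : ℂ} (hω : ω ^ (d + 1) = -1) (z : ℂ) :
    (z ≠ 0 ∧ (starRingEnd ℂ) z ^ d = -z / d) ↔ ∃ τ : ℂ, τ ^ (d + 1) = 1 ∧ z = r * ω * τ := by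
  have hd0 : (d : ℝ) ≠ 0 := by
    have : d ≠ 0 := by omega
    exact_mod_cast this
  have hr0 : (r : ℂ) ≠ 0 := by exact_mod_cast hr.ne'
  have hpow : ∀ x : ℝ, x ^ d = x ^ (d - 1) * x := fun x => by
    rw [← pow_succ, Nat.sub_add_cancel (by omega)]
  have hrC : (r : ℂ) ^ d = r / d := by
    have h : r ^ d = r / d := by rw [hpow, hrd]; ring
    exact_mod_cast h
  have hω0 : ω ≠ 0 := by
    rintro rfl
    simp at hω
  have hdC : (d : ℂ) ≠ 0 := by exact_mod_cast hd0
  have key : ∀ u : ℂ, (starRingEnd ℂ) (r * u) ^ d = -(r * u) / d ↔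
      (starRingEnd ℂ) u ^ d = -u := fun u => by
    rw [map_mul, Complex.conj_ofReal, mul_pow, hrC]
    have e : -((r : ℂ) * u) / d = r / d * -u := by ring
    rw [e]
    exact mul_right_inj' (div_ne_zero hr0 hdC)
  constructor
  · rintro ⟨hz, h⟩
    have hz' : 0 < ‖z‖ := norm_pos_iff.mpr hz
    have hnorm : ‖z‖ = r := by
      have h1 := congrArg norm h
      rw [norm_pow, RCLike.norm_conj, norm_div, norm_neg, Complex.norm_natCast, hpow] at h1
      have h2 : ‖z‖ ^ (d - 1) = 1 / d :=
        mul_right_cancel₀ hz'.ne' (h1.trans (by ring))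
      exact (pow_left_inj₀ hz'.le hr.le (by omega)).mp (h2.trans hrd.symm)
    have hu : ‖z / r‖ = 1 := by
      rw [norm_div, Complex.norm_real, Real.norm_of_nonneg hr.le, hnorm, div_self hr.ne']
    have hzr : z = r * (z / r) := by field_simp
    have h3 := (conj_pow_eq_neg_iff d hu).mp ((key _).mp (by rwa [← hzr]))
    refine ⟨z / r / ω, ?_, by field_simp⟩
    rw [div_pow, h3, hω, div_self (by norm_num)]
  · rintro ⟨τ, hτ, rfl⟩
    have hu : (ω * τ) ^ (d + 1) = -1 := by rw [mul_pow, hω, hτ, mul_one]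
    have hun : ‖ω * τ‖ = 1 := by
      have h1 := congrArg norm hu
      rw [norm_pow, norm_neg, norm_one] at h1
      exact (pow_eq_one_iff_of_nonneg (norm_nonneg _) (by omega)).mp h1
    rw [mul_assoc]
    refine ⟨mul_ne_zero hr0 ?_, (key _).mpr ((conj_pow_eq_neg_iff d hun).mpr hu)⟩
    exact norm_ne_zero_iff.mp (by rw [hun]; exact one_ne_zero)

lemma ncard_roots_of_one (n : ℕ) (hn : 0 < n) : {τ : ℂ | τ ^ n = 1}.ncard = n := by
  have hp := Complex.isPrimitiveRoot_exp n hn.ne'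
  have e : {τ : ℂ | τ ^ n = 1} = (Polynomial.nthRootsFinset n (1 : ℂ) : Set ℂ) := by
    ext τ
    simp [Polynomial.mem_nthRootsFinset hn]
  rw [e, Set.ncard_coe_finset, hp.card_nthRootsFinset]

/-- For an integer `d ≥ 2`, the set of pairs `(c, z) ∈ ℂ × ℂ`
with `z ≠ 0`, `conj(z)^d = -z/d` and `c = z - conj(z)^d` (so that `z` is a fixed
point of `f_c(z) = conj(z)^d + c` satisfying the codimension-2 parabolicity
condition) is exactly the set of the `d + 1` pairs `(c_τ, z_τ)` for `τ^(d+1) = 1`,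
where `z_τ = d^(-1/(d-1)) e^(iπ/(d+1)) τ` and `c_τ = (d+1) d^(-d/(d-1)) e^(iπ/(d+1)) τ`;
in particular this set has exactly `d + 1` elements. -/
theorem multicorn_codimension_two_classification (d : ℕ) (hd : 2 ≤ d) :
    {p : ℂ × ℂ | p.2 ≠ 0 ∧ ((starRingEnd ℂ) p.2) ^ d = -p.2 / d ∧
        p.1 = p.2 - ((starRingEnd ℂ) p.2) ^ d} =
      {p : ℂ × ℂ | ∃ τ : ℂ, τ ^ (d + 1) = 1 ∧
        p = (((d : ℂ) + 1) * (((d : ℝ) ^ (-(d : ℝ) / ((d : ℝ) - 1)) : ℝ) : ℂ) *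
              Complex.exp (Real.pi * Complex.I / ((d : ℂ) + 1)) * τ,
            (((d : ℝ) ^ (-(1 : ℝ) / ((d : ℝ) - 1)) : ℝ) : ℂ) *
              Complex.exp (Real.pi * Complex.I / ((d : ℂ) + 1)) * τ)} ∧
    Set.ncard {p : ℂ × ℂ | p.2 ≠ 0 ∧ ((starRingEnd ℂ) p.2) ^ d = -p.2 / d ∧
        p.1 = p.2 - ((starRingEnd ℂ) p.2) ^ d} = d + 1 := by
  have hd' : (0 : ℝ) < d := by
    have : 0 < d := by omega
    exact_mod_cast this
  have hdC : (d : ℂ) ≠ 0 := by exact_mod_cast hd'.ne'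
  have hω : Complex.exp (Real.pi * Complex.I / ((d : ℂ) + 1)) ^ (d + 1) = -1 := by
    have h1 : (d : ℂ) + 1 ≠ 0 := by exact_mod_cast Nat.succ_ne_zero d
    rw [← Complex.exp_nat_mul, Nat.cast_add, Nat.cast_one, mul_div_cancel₀ _ h1,
      Complex.exp_pi_mul_I]
  have hω0 := Complex.exp_ne_zero (Real.pi * Complex.I / ((d : ℂ) + 1))
  have hr : 0 < (d : ℝ) ^ (-(1 : ℝ) / ((d : ℝ) - 1)) := Real.rpow_pos_of_pos hd' _
  have hrd := multicorn_radius_pow d hd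
  rw [multicorn_rpow_eq_radius_div d hd]
  generalize (d : ℝ) ^ (-(1 : ℝ) / ((d : ℝ) - 1)) = r at hr hrd ⊢
  generalize Complex.exp (Real.pi * Complex.I / ((d : ℂ) + 1)) = ω at hω hω0 ⊢
  have hr0 : (r : ℂ) ≠ 0 := by exact_mod_cast hr.ne'
  have hset : {p : ℂ × ℂ | p.2 ≠ 0 ∧ ((starRingEnd ℂ) p.2) ^ d = -p.2 / d ∧
        p.1 = p.2 - ((starRingEnd ℂ) p.2) ^ d} =
      {p : ℂ × ℂ | ∃ τ : ℂ, τ ^ (d + 1) = 1 ∧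
        p = (((d : ℂ) + 1) * ((r / d : ℝ) : ℂ) * ω * τ, (r : ℂ) * ω * τ)} := by
    ext ⟨c, z⟩
    simp only [Set.mem_ofPred_eq, Prod.mk.injEq]
    constructor
    · rintro ⟨hz, h, hc⟩
      obtain ⟨τ, hτ, hzτ⟩ := (codimension_two_iff d hd hr hrd hω z).mp ⟨hz, h⟩
      refine ⟨τ, hτ, ?_, hzτ⟩
      rw [hc, h, hzτ]
      push_cast
      field_simp
      ring
    · rintro ⟨τ, hτ, hc, hzτ⟩
      obtain ⟨hz, h⟩ := (codimension_two_iff d hd hr hrd hω z).mpr ⟨τ, hτ, hzτ⟩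
      refine ⟨hz, h, ?_⟩
      rw [hc, h, hzτ]
      push_cast
      field_simp
      ring
  refine ⟨hset, ?_⟩
  have himage : {p : ℂ × ℂ | ∃ τ : ℂ, τ ^ (d + 1) = 1 ∧
        p = (((d : ℂ) + 1) * ((r / d : ℝ) : ℂ) * ω * τ, (r : ℂ) * ω * τ)} =
      (fun τ : ℂ => (((d : ℂ) + 1) * ((r / d : ℝ) : ℂ) * ω * τ, (r : ℂ) * ω * τ)) ''
        {τ : ℂ | τ ^ (d + 1) = 1} := by
    ext p
    simp only [Set.mem_ofPred_eq, Set.mem_image, eq_comm]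
  rw [hset, himage, Set.ncard_image_of_injective, ncard_roots_of_one _ d.succ_pos]
  intro a b hab
  exact mul_left_cancel₀ (mul_ne_zero hr0 hω0) (congrArg Prod.snd hab)
end

section
/- Let k ≥ 1 be an integer and let θ ∈ ℝ satisfy e^{i(k+2)θ} = −1. Define a₂ = (k/2)·(k+1)^{2/(k+1)}·e^{i(k+2)θ/2} and a₃ = (k(k−1)/6)·(k+1)^{3/(k+1)}·e^{i(k+2)θ}. Then a₂ is purely imaginary, a₃ is real, and a₃ − a₂² = (k·(k+1)^{3/(k+1)}/12)·(3k·(k+1)^{1/(k+1)} − 2(k−1)), which is a strictly positive real number. -/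
/-! Put `p = (k + 1) ^ (1 / (k + 1))` and `E = e^(i(k+2)θ/2)`. Then `E² = -1`, so `E = ± I`, and
`a₂ = (k/2) p² E`, `a₃ = -(k(k-1)/6) p³`. The closed form of `a₃ - a₂²` is a polynomial identity in
`k` and `p`, and it is positive because `p ≥ 1`. -/

open Complex

/-- Let `k ≥ 1` be an integer and `θ ∈ ℝ` with `e^(i(k+2)θ) = -1`.
Define `a₂ = (k/2) (k+1)^(2/(k+1)) e^(i(k+2)θ/2)` and
`a₃ = (k(k-1)/6) (k+1)^(3/(k+1)) e^(i(k+2)θ)`.  Then `a₂` is purely imaginary,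
`a₃` is real, and
`a₃ - a₂² = (k (k+1)^(3/(k+1)) / 12) (3k (k+1)^(1/(k+1)) - 2(k-1))`,
a strictly positive real number. -/
theorem multicorn_cubic_coefficient_positive
    (k : ℕ) (hk : 1 ≤ k) (θ : ℝ)
    (hθ : Complex.exp (Complex.I * ((k : ℂ) + 2) * (θ : ℂ)) = -1)
    (a₂ a₃ : ℂ)
    (ha₂ : a₂ = ((k : ℂ) / 2) *
      ((((k : ℝ) + 1) ^ ((2 : ℝ) / ((k : ℝ) + 1)) : ℝ) : ℂ) *
      Complex.exp (Complex.I * ((k : ℂ) + 2) * (θ : ℂ) / 2))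
    (ha₃ : a₃ = ((k : ℂ) * ((k : ℂ) - 1) / 6) *
      ((((k : ℝ) + 1) ^ ((3 : ℝ) / ((k : ℝ) + 1)) : ℝ) : ℂ) *
      Complex.exp (Complex.I * ((k : ℂ) + 2) * (θ : ℂ))) :
    a₂.re = 0 ∧ a₃.im = 0 ∧
    a₃ - a₂ ^ 2 =
      ((((k : ℝ) * ((k : ℝ) + 1) ^ ((3 : ℝ) / ((k : ℝ) + 1)) / 12) *
        (3 * (k : ℝ) * ((k : ℝ) + 1) ^ ((1 : ℝ) / ((k : ℝ) + 1)) -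
          2 * ((k : ℝ) - 1)) : ℝ) : ℂ) ∧
    0 < ((k : ℝ) * ((k : ℝ) + 1) ^ ((3 : ℝ) / ((k : ℝ) + 1)) / 12) *
        (3 * (k : ℝ) * ((k : ℝ) + 1) ^ ((1 : ℝ) / ((k : ℝ) + 1)) -
          2 * ((k : ℝ) - 1)) := by
  -- All three powers of `k + 1` are powers of `p = (k + 1) ^ (1 / (k + 1)) ≥ 1`.
  have hp : (1 : ℝ) ≤ ((k : ℝ) + 1) ^ ((1 : ℝ) / ((k : ℝ) + 1)) :=
    Real.one_le_rpow (by linarith [Nat.cast_nonneg (α := ℝ) k]) (by positivity)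
  have hpow (n : ℕ) : ((k : ℝ) + 1) ^ ((n : ℝ) / ((k : ℝ) + 1)) =
      (((k : ℝ) + 1) ^ ((1 : ℝ) / ((k : ℝ) + 1))) ^ n := by
    rw [← Real.rpow_natCast, ← Real.rpow_mul (by positivity)]
    congr 1
    ring
  have h2 := hpow 2
  have h3 := hpow 3
  norm_num only [Nat.cast_ofNat] at h2 h3
  rw [h2] at ha₂
  rw [h3] at ha₃ ⊢
  generalize ((k : ℝ) + 1) ^ ((1 : ℝ) / ((k : ℝ) + 1)) = p at *
  -- The half-angle exponential squares to `-1`, hence equals `± I`.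
  have hE : Complex.exp (Complex.I * ((k : ℂ) + 2) * (θ : ℂ) / 2) ^ 2 = -1 := by
    rw [← Complex.exp_nat_mul, ← hθ]
    congr 1
    push_cast
    ring
  rw [hθ] at ha₃
  generalize Complex.exp (Complex.I * ((k : ℂ) + 2) * (θ : ℂ) / 2) = E at *
  have hk' : (1 : ℝ) ≤ k := by exact_mod_cast hk
  refine ⟨?_, ?_, ?_, ?_⟩
  · have hcoeff : a₂ = (((k : ℝ) / 2 * p ^ 2 : ℝ) : ℂ) * E := by
      rw [ha₂]
      push_cast
      ring
    have hEI : E = Complex.I ∨ E = -Complex.I :=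
      sq_eq_sq_iff_eq_or_eq_neg.mp (by rw [hE, Complex.I_sq])
    rw [hcoeff, Complex.re_ofReal_mul]
    rcases hEI with rfl | rfl <;> simp
  · have hreal : a₃ = ((-((k : ℝ) * ((k : ℝ) - 1) / 6 * p ^ 3) : ℝ) : ℂ) := by
      rw [ha₃]
      push_cast
      ring
    rw [hreal, Complex.ofReal_im]
  · rw [ha₂, ha₃, mul_pow, hE]
    push_cast
    ring
  · -- Since `p ≥ 1`, the last factor is at least `3k - 2(k - 1) = k + 2`.
    have hlast : 0 < 3 * (k : ℝ) * p - 2 * ((k : ℝ) - 1) := by nlinarith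
    positivity
end

section
/- Let g = X + X² ∈ ℂ[X] and n ≥ 2 an integer. Then g^{∘n} − X = X²·q for a polynomial q ∈ ℂ[X] with q(0) = n ≠ 0 and deg q = 2ⁿ − 2. Consequently, the number of solutions of g^{∘n}(z) = z counted with multiplicity which are nonzero equals 2ⁿ − 2, and 2ⁿ − 2 ≡ 2 (mod 4); in particular this count is not divisible by 4. -/
/-!
Modulo `X ^ 3` the `n`-fold iterate of `X + X ^ 2` is `X + n X ^ 2`, by induction on `n`
(`iterate_X_add_X_sq_expansion`), so `g^[n] - X = X ^ 2 * q` with `q(0) = n`. The iterate has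
degree `2 ^ n > 1`, hence `q` has degree `2 ^ n - 2`. As `q(0) ≠ 0`, the nonzero roots of
`X ^ 2 * q` are exactly the roots of `q`, and over `ℂ` there are `deg q` of them with multiplicity.
-/

/-- The expansion of the iterates of `X + X ^ 2` at `0` to second order. -/
lemma iterate_X_add_X_sq_expansion (n : ℕ) :
    ∃ r : Polynomial ℂ,
      (fun p => (Polynomial.X + Polynomial.X ^ 2 : Polynomial ℂ).comp p)^[n] Polynomial.X =
        Polynomial.X + Polynomial.X ^ 2 * (Polynomial.C (n : ℂ) + Polynomial.X * r) := by
  induction n with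
  | zero => exact ⟨0, by simp⟩
  | succ n ih =>
    obtain ⟨r, hr⟩ := ih
    refine ⟨r + 2 * (Polynomial.C (n : ℂ) + Polynomial.X * r) +
      Polynomial.X * (Polynomial.C (n : ℂ) + Polynomial.X * r) ^ 2, ?_⟩
    rw [Function.iterate_succ_apply', hr]
    simp only [Polynomial.add_comp, Polynomial.pow_comp, Polynomial.X_comp, Nat.cast_succ,
      Polynomial.C_add, Polynomial.C_1]
    ring

/-- Let `g = X + X²` and `n ≥ 2`.  Then
`g^[n] - X = X² * q` with `q(0) = n ≠ 0` and `deg q = 2^n - 2`.  Consequently the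
number of nonzero solutions of `g^[n](z) = z` counted with multiplicity (i.e. the
number of nonzero roots of `g^[n] - X`) is `2^n - 2`, and `2^n - 2 ≡ 2 (mod 4)`;
in particular this count is not divisible by `4`. -/
theorem iterate_X_add_X_sq_periodic_point_count
    (g : Polynomial ℂ) (hg : g = Polynomial.X + Polynomial.X ^ 2)
    (n : ℕ) (hn : 2 ≤ n) :
    (∃ q : Polynomial ℂ,
      (fun p => g.comp p)^[n] Polynomial.X - Polynomial.X = Polynomial.X ^ 2 * q ∧
      q.coeff 0 = (n : ℂ) ∧ (n : ℂ) ≠ 0 ∧ q.natDegree = 2 ^ n - 2) ∧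
    Multiset.card (Multiset.filter (fun z => z ≠ 0)
      ((fun p => g.comp p)^[n] Polynomial.X - Polynomial.X).roots) = 2 ^ n - 2 ∧
    (2 ^ n - 2) % 4 = 2 ∧ ¬ (4 ∣ (2 ^ n - 2)) := by
  obtain ⟨m, rfl⟩ := Nat.exists_eq_add_of_le hn
  have h4 : 2 ^ (2 + m) = 4 * 2 ^ m := by rw [pow_add]; norm_num
  have hpos : 0 < 2 ^ m := by positivity
  have hn0 : ((2 + m : ℕ) : ℂ) ≠ 0 := Nat.cast_ne_zero.mpr (by omega)
  obtain ⟨r, hr⟩ := iterate_X_add_X_sq_expansion (2 + m)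
  rw [← hg] at hr
  set q : Polynomial ℂ := Polynomial.C ((2 + m : ℕ) : ℂ) + Polynomial.X * r with hq
  have hq0 : q.coeff 0 = ((2 + m : ℕ) : ℂ) := by simp [hq]
  have hqne : q ≠ 0 := by
    intro h
    rw [h, Polynomial.coeff_zero] at hq0
    exact hn0 hq0.symm
  have hgdeg : g.natDegree = 2 := by rw [hg]; compute_degree!
  have hfac : (fun p => g.comp p)^[2 + m] Polynomial.X - Polynomial.X = Polynomial.X ^ 2 * q := by
    rw [hr]; ring
  have hdeg : ((fun p => g.comp p)^[2 + m] Polynomial.X).natDegree = 2 ^ (2 + m) := by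
    rw [Polynomial.natDegree_iterate_comp, hgdeg, Polynomial.natDegree_X, mul_one]
  have hqdeg : q.natDegree = 2 ^ (2 + m) - 2 := by
    have h := congrArg Polynomial.natDegree hfac
    rw [Polynomial.natDegree_sub_eq_left_of_natDegree_lt
      (by rw [hdeg, Polynomial.natDegree_X]; omega), hdeg,
      Polynomial.natDegree_X_pow_mul 2 hqne] at h
    omega
  refine ⟨⟨q, hfac, hq0, hn0, hqdeg⟩, ?_, by omega, by omega⟩
  have hroots : ∀ z ∈ q.roots, z ≠ 0 := by
    rintro z hz rfl
    rw [Polynomial.mem_roots hqne, Polynomial.IsRoot.def, ← Polynomial.coeff_zero_eq_eval_zero,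
      hq0] at hz
    exact hn0 hz
  rw [hfac, Polynomial.roots_mul (mul_ne_zero (pow_ne_zero 2 Polynomial.X_ne_zero) hqne),
    Polynomial.roots_X_pow, Multiset.filter_add, Multiset.filter_eq_self.mpr hroots,
    Multiset.filter_eq_nil.mpr (by simp [Multiset.mem_nsmul]), zero_add,
    IsAlgClosed.card_roots_eq_natDegree, hqdeg]
end

section
/- Let U ⊆ ℂ be an open neighborhood of 0, let h be holomorphic on U with h(0) = 0 and h'(0) = 1, and let ζ = σ ∘ h be the corresponding antiholomorphic map. Suppose ζ is an involution near 0, i.e. ζ(ζ(z)) = z for all z in some neighborhood of 0. Then ζ is holomorphically conjugate to complex conjugation: there exists an open neighborhood V of 0 and an injective holomorphic map ψ : V → ℂ with ψ(0) = 0 and ψ'(0) ≠ 0 such that ζ(ψ(w)) = ψ(conj(w)) for all w in a neighborhood of 0 in V. In particular, the fixed-point set of ζ near 0 is the image under ψ of a real interval, i.e. a real-analytic curve through 0, and ζ is the Schwarz reflection with respect to this curve. -/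
/-!
The conjugacy is obtained by averaging. Put `φ z = z + conj (ζ z) = z + h z`. Since `ζ ∘ ζ = id`,
`φ (ζ z) = ζ z + conj z = conj (φ z)`, and `φ' 0 = 1 + h' 0 = 2 ≠ 0`. Hence `φ` has a holomorphic
local inverse `ψ` (`exists_analyticAt_local_inverse`), and reading the identity through `ψ` gives
`ζ (ψ w) = ψ (conj w)` near `0`.
-/

open Complex Filter Topology

/-- The holomorphic inverse function theorem at a fixed point `0`, with the two inverse identities
in germ form. -/
lemma exists_analyticAt_local_inverse {φ : ℂ → ℂ} (hφ : AnalyticAt ℂ φ 0) (hφ0 : φ 0 = 0)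
    (hφ' : deriv φ 0 ≠ 0) :
    ∃ ψ : ℂ → ℂ, AnalyticAt ℂ ψ 0 ∧ ψ 0 = 0 ∧ deriv ψ 0 ≠ 0 ∧
      (∀ᶠ z in 𝓝 0, ψ (φ z) = z) ∧ ∀ᶠ w in 𝓝 0, φ (ψ w) = w := by
  have hs := hφ.hasStrictDerivAt
  have ha := hφ.analyticAt_localInverse hφ'
  have hl := hs.eventually_left_inverse hφ'
  have hr := hs.eventually_right_inverse hφ'
  have hd := (hs.to_localInverse hφ').hasDerivAt.deriv
  rw [hφ0] at ha hr hd
  refine ⟨_, ha, ?_, ?_, hl, hr⟩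
  · simpa only [hφ0] using hl.self_of_nhds
  · simpa only [hd] using inv_ne_zero (by assumption)

/-- Let `U ⊆ ℂ` be an open neighborhood of `0`, `h` holomorphic
on `U` with `h 0 = 0` and `h' 0 = 1`, and let `ζ = σ ∘ h` (`ζ z = conj (h z)`) be
the corresponding antiholomorphic map.  If `ζ` is an involution near `0`
(`ζ (ζ z) = z` on a neighborhood `W` of `0`), then `ζ` is holomorphically
conjugate to complex conjugation: there are an open neighborhood `V` of `0` and
an injective holomorphic `ψ : V → ℂ` with `ψ 0 = 0` and `ψ' 0 ≠ 0` such that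
`ζ (ψ w) = ψ (conj w)` for all `w` in a neighborhood of `0` in `V`.  (Hence the
fixed-point set of `ζ` near `0` is the `ψ`-image of a real interval — a
real-analytic curve — and `ζ` is the Schwarz reflection in this curve.) -/
theorem antiholomorphic_involution_conjugate_to_conj
    (U : Set ℂ) (hU : IsOpen U) (h0U : (0 : ℂ) ∈ U)
    (h : ℂ → ℂ) (hh : DifferentiableOn ℂ h U) (hh0 : h 0 = 0)
    (hh1 : deriv h 0 = 1)
    (W : Set ℂ) (hW : IsOpen W) (h0W : (0 : ℂ) ∈ W) (hWU : W ⊆ U)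
    (hWmap : ∀ z ∈ W, (starRingEnd ℂ) (h z) ∈ U)
    (hinv : ∀ z ∈ W, (starRingEnd ℂ) (h ((starRingEnd ℂ) (h z))) = z) :
    ∃ (V : Set ℂ) (ψ : ℂ → ℂ), IsOpen V ∧ (0 : ℂ) ∈ V ∧
      DifferentiableOn ℂ ψ V ∧ Set.InjOn ψ V ∧ ψ 0 = 0 ∧ deriv ψ 0 ≠ 0 ∧
      ∃ V' : Set ℂ, IsOpen V' ∧ (0 : ℂ) ∈ V' ∧ V' ⊆ V ∧
        ∀ w ∈ V', (starRingEnd ℂ) w ∈ V ∧ ψ w ∈ U ∧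
          (starRingEnd ℂ) (h (ψ w)) = ψ ((starRingEnd ℂ) w) := by
  have hU0 : U ∈ 𝓝 (0 : ℂ) := hU.mem_nhds h0U
  have hha : AnalyticAt ℂ h 0 := hh.analyticAt hU0
  have hder : HasDerivAt (fun z ↦ z + h z) (1 + 1) 0 := by
    have := hha.differentiableAt.hasDerivAt
    rw [hh1] at this
    exact (hasDerivAt_id' (0 : ℂ)).add this
  obtain ⟨ψ, hψ, hψ0, hψ', hl, hr⟩ :=
    exists_analyticAt_local_inverse (φ := fun z ↦ z + h z) (analyticAt_id.add hha)
      (by simp [hh0]) (by rw [hder.deriv]; norm_num)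
  have hψt : Tendsto ψ (𝓝 0) (𝓝 0) := by simpa only [hψ0] using hψ.continuousAt.tendsto
  have hht : Tendsto h (𝓝 0) (𝓝 0) := by simpa only [hh0] using hha.continuousAt.tendsto
  have hconj : Tendsto (starRingEnd ℂ) (𝓝 0) (𝓝 0) := by
    simpa only [map_zero] using Complex.continuous_conj.tendsto 0
  obtain ⟨V, hV, hVo, h0V⟩ := eventually_nhds_iff.mp (hψ.eventually_analyticAt.and hr)
  have hev : ∀ᶠ w in 𝓝 (0 : ℂ), w ∈ V ∧ (starRingEnd ℂ) w ∈ V ∧ ψ w ∈ W ∧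
      ψ ((starRingEnd ℂ) (h (ψ w)) + h ((starRingEnd ℂ) (h (ψ w)))) =
        (starRingEnd ℂ) (h (ψ w)) := by
    have hVn : V ∈ 𝓝 (0 : ℂ) := hVo.mem_nhds h0V
    filter_upwards [hVn, hconj hVn, hψt (hW.mem_nhds h0W),
      (hconj.comp (hht.comp hψt)).eventually hl] with w h1 h2 h3 h4
    exact ⟨h1, h2, h3, h4⟩
  obtain ⟨V', hV', hV'o, h0V'⟩ := eventually_nhds_iff.mp hev
  refine ⟨V, ψ, hVo, h0V, fun w hw ↦ (hV w hw).1.differentiableAt.differentiableWithinAt,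
    fun a ha b hb hab ↦ ?_, hψ0, hψ', V', hV'o, h0V', fun w hw ↦ (hV' w hw).1, fun w hw ↦ ?_⟩
  · rw [← (hV a ha).2, ← (hV b hb).2, hab]
  · obtain ⟨hwV, hcV, hwW, hw4⟩ := hV' w hw
    refine ⟨hcV, hWU hwW, ?_⟩
    -- `φ (ζ z) = conj (φ z)` at `z = ψ w`, where `φ (ψ w) = w`
    have key : (starRingEnd ℂ) (h (ψ w)) + h ((starRingEnd ℂ) (h (ψ w))) =
        (starRingEnd ℂ) w := by
      have e := congrArg (starRingEnd ℂ) (hinv _ hwW)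
      rw [Complex.conj_conj] at e
      rw [e, ← map_add, add_comm (h (ψ w))]
      exact congrArg _ (hV w hwV).2
    rw [← hw4, key]
end
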